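/- A probability realizing the variational principle is stationary: let A : X → ℝ be normalized continuous, V continuous, λ ∈ ℝ, F ∈ C(X,ℝ) with F > 0 and 𝓛_A F = (1 − V + λ)·F pointwise; set γ_V := 1 − V + λ and B_V := A + log F − log F∘σ − log γ_V∘σ. Suppose a Borel probability ρ on X satisfies inf{ ∫ ( (𝓛_A u)(x) − u(x) + V(x)·u(x) − λ·u(x) )/u(x) dρ(x) : u ∈ C(X,ℝ), u > 0 } = 0 (equivalently, λ = ∫V dρ − I(ρ) with I(ρ) := −inf{∫(𝓛_A u − u)/u dρ : u ∈ C(X,ℝ), u > 0}). Then for every f ∈ C(X,ℝ): ∫ γ_V(x)·Σ_{a=1}^d e^{B_V(ax)}·( f(ax) − f(x) ) dρ(x) = 0. -/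

import Mathlib

/-!
The proof is a first-variation argument. Put `p_a(x) = e^{A(ax)} F(ax) / F(x)`; the eigenvalue equation
says `Σ_a p_a = γ_V`, so `γ_V > 0` and `γ_V(x) e^{B_V(ax)} = p_a(x)`. For `f ∈ C(X,ℝ)` and `t ∈ ℝ`, testing
the infimum with `u = F e^{tf}` gives
`0 ≤ ∫ Σ_a p_a(x) (e^{t (f(ax) - f(x))} - 1) dρ(x)`.
The set of values is bounded below, because `𝓛_A u / u ≥ 0`, so the infimum really is a lower bound.
Since `e^s - 1 ≤ s + s²` for `|s| ≤ 1`, the right-hand side is at most `t I + t² C` for small `t`, where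
`I` is the integral in the claim. A line through the origin that is bounded below by `-t² C` near `0` is
zero (`eq_zero_of_quadratic_bound`), so `I = 0`.
-/

open MeasureTheory Filter

noncomputable section

/-- The concatenation `a·x`: `(ax)(0) = a`, `(ax)(n+1) = x n`. -/
def cons {d : ℕ} (a : Fin d) (x : ℕ → Fin d) : ℕ → Fin d
  | 0 => a
  | n + 1 => x n

/-- The shift map `σ` on the Bernoulli space. -/
def shift {d : ℕ} (x : ℕ → Fin d) : ℕ → Fin d := fun n => x (n + 1)

open Classical in
/-- The metric `d_θ` on the Bernoulli space: `d_θ(x,y) = θ^{min{n : x n ≠ y n}}` for `x ≠ y`. -/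
def distTheta {d : ℕ} (θ : ℝ) (x y : ℕ → Fin d) : ℝ :=
  if x = y then 0 else θ ^ sInf {n : ℕ | x n ≠ y n}

/-- The Ruelle operator with potential `B`, applied pointwise:
`(𝓛_B g)(x) = Σ_{a} e^{B(ax)} g(ax)`. -/
def ruelleSum {d : ℕ} (B : (ℕ → Fin d) → ℝ) (g : (ℕ → Fin d) → ℝ) (x : ℕ → Fin d) : ℝ :=
  ∑ a : Fin d, Real.exp (B (cons a x)) * g (cons a x)

/-- The exponential `e^B` of a bounded operator `B` on `C(X,ℝ)`, applied to `f`: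
`e^B f = Σ_{n=0}^∞ (1/n!) Bⁿ f`. -/
def opExp {X : Type*} [TopologicalSpace X] [CompactSpace X]
    (B : C(X, ℝ) →L[ℝ] C(X, ℝ)) (f : C(X, ℝ)) : C(X, ℝ) :=
  ∑' n : ℕ, ((Nat.factorial n : ℝ)⁻¹ • (B ^ n) f)

/-- `γ_V = 1 - V + λ`. -/
def gammaV {d : ℕ} (V : (ℕ → Fin d) → ℝ) (lam : ℝ) (x : ℕ → Fin d) : ℝ := 1 - V x + lam

/-- `B_V = A + log F - log F∘σ - log γ_V∘σ`. -/
def BV {d : ℕ} (A V : (ℕ → Fin d) → ℝ) (lam : ℝ) (F : (ℕ → Fin d) → ℝ)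
    (y : ℕ → Fin d) : ℝ :=
  A y + Real.log (F y) - Real.log (F (shift y)) - Real.log (gammaV V lam (shift y))

theorem continuous_cons {d : ℕ} (a : Fin d) : Continuous (cons a : (ℕ → Fin d) → ℕ → Fin d) := by
  refine continuous_pi fun n => ?_
  cases n with
  | zero => exact continuous_const
  | succ n => exact continuous_apply n

theorem integrable_of_cont {d : ℕ} (ρ : Measure (ℕ → Fin d)) [IsProbabilityMeasure ρ]
    {g : (ℕ → Fin d) → ℝ} (hg : Continuous g) : Integrable g ρ :=
  hg.integrable_of_hasCompactSupport (HasCompactSupport.of_compactSpace g)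

theorem eq_zero_of_quadratic_bound {I C M : ℝ} (hC : 0 ≤ C) (hM : 0 ≤ M)
    (h : ∀ t : ℝ, |t| * M ≤ 1 → 0 ≤ t * I + t ^ 2 * C) : I = 0 := by
  -- `t = -I / K`, with `K` large enough that `|t| M ≤ 1` and `C < K`.
  set K : ℝ := |I| * M + C + 1 with hK
  have hIM : 0 ≤ |I| * M := by positivity
  have hKpos : 0 < K := by positivity
  have h1 := h (-I / K) (by
    rw [abs_div, abs_neg, abs_of_pos hKpos, div_mul_eq_mul_div, div_le_one hKpos]
    linarith)
  have h2 : (-I / K) * I + (-I / K) ^ 2 * C = -(I ^ 2 * (K - C)) / K ^ 2 := by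
    field_simp
    ring
  rw [h2, le_div_iff₀ (by positivity)] at h1
  have h3 : 1 ≤ K - C := by linarith
  have h4 : I ^ 2 ≤ 0 := by nlinarith [sq_nonneg I]
  exact pow_eq_zero_iff (two_ne_zero) |>.1 (le_antisymm h4 (sq_nonneg I))

/-- **A probability realizing the variational principle is stationary.** -/
theorem stmt_13 (d : ℕ) (hd : 2 ≤ d)
    (A V : (ℕ → Fin d) → ℝ) (hA : Continuous A) (hV : Continuous V)
    (hAnorm : ∀ x, ∑ a : Fin d, Real.exp (A (cons a x)) = 1)
    (lam : ℝ) (F : C((ℕ → Fin d), ℝ)) (hFpos : ∀ x, 0 < F x)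
    (heig : ∀ x, ruelleSum A F x = (1 - V x + lam) * F x)
    (ρ : Measure (ℕ → Fin d)) (hρp : IsProbabilityMeasure ρ)
    (hρ : sInf {r : ℝ | ∃ u : C((ℕ → Fin d), ℝ), (∀ x, 0 < u x) ∧
      r = ∫ x, (ruelleSum A u x - u x + V x * u x - lam * u x) / u x ∂ρ} = 0) :
    ∀ f : C((ℕ → Fin d), ℝ),
      ∫ x, gammaV V lam x *
        ∑ a : Fin d, Real.exp (BV A V lam F (cons a x)) * (f (cons a x) - f x) ∂ρ = 0 := by
  intro f
  have hcf : ∀ g : C((ℕ → Fin d), ℝ), ∀ a, Continuous fun x => g (cons a x) :=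
    fun g a => g.continuous.comp (continuous_cons a)
  have hcA : ∀ a, Continuous fun x => Real.exp (A (cons a x)) :=
    fun a => Real.continuous_exp.comp (hA.comp (continuous_cons a))
  set p : Fin d → (ℕ → Fin d) → ℝ :=
    fun a x => Real.exp (A (cons a x)) * F (cons a x) / F x with hp
  have hpc : ∀ a, Continuous (p a) := fun a =>
    ((hcA a).mul (hcf F a)).div F.continuous fun x => (hFpos x).ne'
  have hppos : ∀ a x, 0 < p a x := fun a x =>
    div_pos (mul_pos (Real.exp_pos _) (hFpos _)) (hFpos x)
  have hsum : ∀ x, ∑ a, p a x = gammaV V lam x := by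
    intro x
    have h := heig x
    simp only [ruelleSum] at h
    simp only [hp, ← Finset.sum_div, gammaV]
    rw [h, mul_div_assoc, div_self (hFpos x).ne', mul_one]
  have hγ : ∀ x, 0 < gammaV V lam x := fun x => by
    rw [← hsum x]
    exact Finset.sum_pos (fun a _ => hppos a x) ⟨⟨0, by omega⟩, Finset.mem_univ _⟩
  have hB : ∀ a x, gammaV V lam x * Real.exp (BV A V lam F (cons a x)) = p a x := by
    intro a x
    have hs : shift (cons a x) = x := rfl
    simp only [BV, hs, hp]
    rw [Real.exp_sub, Real.exp_sub, Real.exp_add, Real.exp_log (hFpos _),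
      Real.exp_log (hFpos _), Real.exp_log (hγ x), mul_div_cancel₀ _ (hγ x).ne']
  have hint : ∀ x, gammaV V lam x *
      ∑ a : Fin d, Real.exp (BV A V lam F (cons a x)) * (f (cons a x) - f x)
      = ∑ a, p a x * (f (cons a x) - f x) := by
    intro x
    rw [Finset.mul_sum]
    exact Finset.sum_congr rfl fun a _ => by rw [← mul_assoc, hB]
  simp only [hint]
  have hcd : ∀ a, Continuous fun x => f (cons a x) - f x :=
    fun a => (hcf f a).sub f.continuous
  -- `sInf` of a set of reals is only meaningful for a set that is bounded below.
  have hbdd : BddBelow {r : ℝ | ∃ u : C((ℕ → Fin d), ℝ), (∀ x, 0 < u x) ∧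
      r = ∫ x, (ruelleSum A u x - u x + V x * u x - lam * u x) / u x ∂ρ} := by
    refine ⟨∫ x, (-1 + V x - lam) ∂ρ, ?_⟩
    rintro r ⟨u, hu, rfl⟩
    have hLc : Continuous (ruelleSum A u) :=
      continuous_finsetSum _ fun a _ => (hcA a).mul (hcf u a)
    refine integral_mono (integrable_of_cont ρ (by fun_prop)) (integrable_of_cont ρ ?_) fun x => ?_
    · exact Continuous.div (by fun_prop) u.continuous fun x => (hu x).ne'
    · have hL : 0 ≤ ruelleSum A u x :=
        Finset.sum_nonneg fun a _ => (mul_pos (Real.exp_pos _) (hu _)).le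
      change -1 + V x - lam ≤ _
      rw [le_div_iff₀ (hu x)]
      linarith
  have hvar : ∀ t : ℝ, 0 ≤ ∫ x, ∑ a, p a x * (Real.exp (t * (f (cons a x) - f x)) - 1) ∂ρ := by
    intro t
    let u : C((ℕ → Fin d), ℝ) := ⟨fun x => F x * Real.exp (t * f x), by fun_prop⟩
    have hu : ∀ x, 0 < u x := fun x => mul_pos (hFpos x) (Real.exp_pos _)
    have h := csInf_le hbdd ⟨u, hu, rfl⟩
    rw [hρ] at h
    refine h.trans_eq (integral_congr_ae (Eventually.of_forall fun x => ?_))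
    have hux : ∀ y, u y = F y * Real.exp (t * f y) := fun _ => rfl
    have hterm : ∀ a, p a x * (Real.exp (t * (f (cons a x) - f x)) - 1)
        = Real.exp (A (cons a x)) * u (cons a x) / u x - p a x := by
      intro a
      have hF := (hFpos x).ne'
      have he := (Real.exp_pos (t * f x)).ne'
      simp only [hp, hux]
      rw [mul_sub t, Real.exp_sub]
      field_simp
    change (ruelleSum A u x - u x + V x * u x - lam * u x) / u x
      = ∑ a, p a x * (Real.exp (t * (f (cons a x) - f x)) - 1)
    simp only [hterm]
    rw [Finset.sum_sub_distrib, hsum, ← Finset.sum_div]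
    have hu' := (hu x).ne'
    simp only [ruelleSum, gammaV]
    field_simp
    ring
  refine eq_zero_of_quadratic_bound
    (C := ∫ x, ∑ a, p a x * (f (cons a x) - f x) ^ 2 ∂ρ) (M := 2 * ‖f‖)
    (integral_nonneg fun x => Finset.sum_nonneg fun a _ =>
      mul_nonneg (hppos a x).le (sq_nonneg _)) (by positivity) fun t ht => ?_
  refine (hvar t).trans ?_
  have hI1 : Continuous fun x => ∑ a, p a x * (f (cons a x) - f x) :=
    continuous_finsetSum _ fun a _ => (hpc a).mul (hcd a)
  have hI2 : Continuous fun x => ∑ a, p a x * (f (cons a x) - f x) ^ 2 :=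
    continuous_finsetSum _ fun a _ => (hpc a).mul ((hcd a).pow 2)
  rw [← integral_const_mul, ← integral_const_mul, ← integral_add
    ((integrable_of_cont ρ hI1).const_mul t) ((integrable_of_cont ρ hI2).const_mul (t ^ 2))]
  refine integral_mono (integrable_of_cont ρ ?_)
    (integrable_of_cont ρ ((hI1.const_mul t).add (hI2.const_mul (t ^ 2)))) fun x => ?_
  · exact continuous_finsetSum _ fun a _ => (hpc a).mul
      ((Real.continuous_exp.comp ((hcd a).const_mul t)).sub continuous_const)
  · change ∑ a, p a x * (Real.exp (t * (f (cons a x) - f x)) - 1) ≤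
      t * (∑ a, p a x * (f (cons a x) - f x)) + t ^ 2 * ∑ a, p a x * (f (cons a x) - f x) ^ 2
    rw [Finset.mul_sum, Finset.mul_sum, ← Finset.sum_add_distrib]
    refine Finset.sum_le_sum fun a _ => ?_
    have hd1 : |f (cons a x) - f x| ≤ 2 * ‖f‖ := by
      have h1 := f.norm_coe_le_norm (cons a x)
      have h2 := f.norm_coe_le_norm x
      rw [Real.norm_eq_abs] at h1 h2
      linarith [abs_sub (f (cons a x)) (f x)]
    have hs : |t * (f (cons a x) - f x)| ≤ 1 := by
      rw [abs_mul]
      exact (mul_le_mul_of_nonneg_left hd1 (abs_nonneg t)).trans ht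
    have he := (abs_le.1 (Real.abs_exp_sub_one_sub_id_le hs)).2
    have h3 : Real.exp (t * (f (cons a x) - f x)) - 1 ≤
        t * (f (cons a x) - f x) + (t * (f (cons a x) - f x)) ^ 2 := by linarith
    calc p a x * (Real.exp (t * (f (cons a x) - f x)) - 1)
        ≤ p a x * (t * (f (cons a x) - f x) + (t * (f (cons a x) - f x)) ^ 2) :=
          mul_le_mul_of_nonneg_left h3 (hppos a x).le
      _ = _ := by ring
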